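/- For every real x ≥ L = 11/2, |w_0(x)| ≤ (15/2)·x^{-10} and |w_0'(x)| ≤ 8.85·x^{-39/4}. -/

import Mathlib

/-!
Write `φ(t) = b t^{5/4}`, so `φ'(t) = (a/2) t^{1/4}`, and `amp t = -t^{1/8} N₀(t)`. The integrand
`𝒢_k(t) t N₀(t)` equals `-amp(t) t^{1/4} e^{±iφ(t)}`, a multiple of `amp · (e^{±iφ})'`. One
integration by parts (`integral_src`) therefore turns each integral in `w₀` into `2/a` times a
boundary term of modulus `amp x` minus a remainder `∫_x^∞ -amp'(t) e^{±iφ(t)} dt`. Since `amp`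
decreases to `0` on `[L, ∞)` (`slope_nonneg`), that remainder is also at most `amp x`
(`norm_rem_le`), and `amp x ≤ K x^{-75/8}` (`amp_le`).

Inserting this into `w₀` gives `|w₀| ≤ (8/a²) K x^{-10}`, and
`8K/a² = 4412401/589824 < 15/2`.

In the derivative `w₀'` the terms from differentiating the integrals cancel. The factor `x^{-5/8}` contributes
`-(5/8) w₀/x`, and the phases contribute, up to sign, `(x^{1/4}/2)(𝒢₁ ∫ 𝒢₂ t N₀ + 𝒢₂ ∫ 𝒢₁ t N₀)`, in which the
two boundary terms cancel, so that it is at most `(2/a) K x^{-39/4}` (`norm_cross_le`).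
The two constants are below `0.5553` (using `x^{5/4} ≥ 8.42`) and `8.29`, and their sum is below
`8.85`.
-/

open Set Complex MeasureTheory

noncomputable section

/-- `L = 11/2`. -/
def LP1 : ℝ := 11/2

/-- `b = (4/5)·24^{1/4}`. -/
def bP1 : ℝ := (4/5) * (24 : ℝ) ^ ((1 : ℝ)/4)

/-- `a = (5/2)·b`. -/
def aP1 : ℝ := (5/2) * bP1

/-- `N₀(x) = -(4412401/(98304√6)) x^{-19/2} [1 - (1225/(90049√6)) x^{-5/2}
  + (30625/2161176) x^{-5}]`. -/
def N₀ (x : ℝ) : ℝ :=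
  -(4412401 / (98304 * Real.sqrt 6)) * x ^ (-(19 : ℝ)/2) *
    (1 - (1225 / (90049 * Real.sqrt 6)) * x ^ (-(5 : ℝ)/2) +
      (30625 / 2161176) * x ^ (-(5 : ℝ)))

/-- `𝒢_j(x) = x^{-5/8} e^{(-1)^j i b x^{5/4}}`, so that `𝒢₁(x) = x^{-5/8} e^{-i b x^{5/4}}`
and `𝒢₂(x) = x^{-5/8} e^{i b x^{5/4}}`. -/
def calG (j : ℕ) (x : ℝ) : ℂ :=
  ((x ^ (-(5 : ℝ)/8) : ℝ) : ℂ) *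
    Complex.exp ((-1 : ℂ) ^ j * Complex.I * (bP1 : ℂ) * ((x ^ ((5 : ℝ)/4) : ℝ) : ℂ))

/-- `w₀(x) = Σ_{j=1}^{2} ((-1)^j/(i a)) 𝒢_j(x) ∫_∞^x 𝒢_{3-j}(t) t N₀(t) dt`
(the integral `∫_∞^x` being `-∫_x^∞`). -/
def w₀c (x : ℝ) : ℂ :=
  ∑ j ∈ Finset.Icc 1 2,
    ((-1 : ℂ) ^ j / (Complex.I * (aP1 : ℂ))) * calG j x *
      (-(∫ t in Set.Ioi x, calG (3 - j) t * (t : ℂ) * ((N₀ t : ℝ) : ℂ)))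

/-- The real-valued `w₀` (for real `x ≥ L`, `w₀(x)` is real). -/
def w₀r (x : ℝ) : ℝ := (w₀c x).re

/-! ### Amplitude, phase and remainder -/

/-- The constant `K = 4412401/(98304√6)` of `N₀`. -/
def ampK : ℝ := 4412401 / (98304 * Real.sqrt 6)

/-- The relative coefficient of `x^{-5/2}` in `N₀`, with its sign removed. -/
def ampC : ℝ := 1225 / (90049 * Real.sqrt 6)

/-- The relative coefficient of `x^{-5}` in `N₀`. -/
def ampD : ℝ := 30625 / 2161176

/-- `amp t = -t^{1/8} N₀(t)` for `t > 0`, expanded into powers. -/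
def amp (t : ℝ) : ℝ :=
  ampK * t ^ (-(75 : ℝ)/8) - ampK * ampC * t ^ (-(95 : ℝ)/8) + ampK * ampD * t ^ (-(115 : ℝ)/8)

/-- `ampSlope = -amp'` on `(0, ∞)`. -/
def ampSlope (t : ℝ) : ℝ :=
  ampK * (75/8) * t ^ (-(83 : ℝ)/8) - ampK * ampC * (95/8) * t ^ (-(103 : ℝ)/8) +
    ampK * ampD * (115/8) * t ^ (-(123 : ℝ)/8)

/-- The unimodular factor `e^{(-1)^k i b t^{5/4}}` of `𝒢_k`. -/
def osc (k : ℕ) (t : ℝ) : ℂ :=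
  Complex.exp ((-1 : ℂ) ^ k * Complex.I * (bP1 : ℂ) * ((t ^ ((5 : ℝ)/4) : ℝ) : ℂ))

/-- The integrand `𝒢_k(t) t N₀(t)`. -/
def src (k : ℕ) (t : ℝ) : ℂ := calG k t * (t : ℂ) * ((N₀ t : ℝ) : ℂ)

/-- The remainder `∫_x^∞ ampSlope(t) e^{(-1)^k i b t^{5/4}} dt` after one integration by parts. -/
def rem (k : ℕ) (x : ℝ) : ℂ := ∫ t in Set.Ioi x, ((ampSlope t : ℝ) : ℂ) * osc k t

/-! ### Constants -/

lemma ampK_pos : 0 < ampK := by unfold ampK; positivity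

lemma ampC_pos : 0 < ampC := by unfold ampC; positivity

lemma sqrt6_bounds : 2449/1000 ≤ Real.sqrt 6 ∧ Real.sqrt 6 ≤ 5/2 := by
  constructor
  · apply Real.le_sqrt_of_sq_le; norm_num
  · rw [Real.sqrt_le_left (by norm_num)]; norm_num

lemma ampC_lower : 1225 / (90049 * (5/2)) ≤ ampC := by
  unfold ampC
  have := sqrt6_bounds
  have h0 : 0 < Real.sqrt 6 := by positivity
  gcongr
  exact this.2

lemma ampC_upper : ampC ≤ 1225 / (90049 * 2) := by
  unfold ampC
  have := sqrt6_bounds.1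
  gcongr
  linarith

lemma aP1_eq : aP1 = 2 * (24 : ℝ) ^ ((1 : ℝ)/4) := by unfold aP1 bP1; ring

lemma aP1_pos : 0 < aP1 := by rw [aP1_eq]; positivity

lemma aP1_sq : aP1 ^ 2 = 8 * Real.sqrt 6 := by
  have h1 : ((24 : ℝ) ^ ((1 : ℝ)/4)) ^ 2 = 2 * Real.sqrt 6 := by
    rw [← Real.rpow_natCast, ← Real.rpow_mul (by norm_num)]
    rw [show (1 : ℝ)/4 * ((2 : ℕ) : ℝ) = 1/2 by norm_num, ← Real.sqrt_eq_rpow]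
    rw [show (24 : ℝ) = 2 ^ 2 * 6 by norm_num, Real.sqrt_mul (by norm_num),
      Real.sqrt_sq (by norm_num)]
  rw [aP1_eq, mul_pow, h1]; ring

lemma aP1_lower : 4426/1000 ≤ aP1 := by
  have h := aP1_sq
  have h6 := sqrt6_bounds.1
  by_contra! hc
  have : aP1 ^ 2 < (4426/1000) ^ 2 := by
    have := aP1_pos
    gcongr
  nlinarith [Real.sq_sqrt (show (0 : ℝ) ≤ 6 by norm_num)]

/-! ### The phase factor -/

lemma norm_osc (k : ℕ) (t : ℝ) : ‖osc k t‖ = 1 := by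
  unfold osc
  rcases neg_one_pow_eq_or ℂ k with h | h <;> rw [h]
  · have := Complex.norm_exp_ofReal_mul_I (bP1 * t ^ ((5 : ℝ)/4))
    rw [← this]; congr 2; push_cast; ring
  · have := Complex.norm_exp_ofReal_mul_I (-(bP1 * t ^ ((5 : ℝ)/4)))
    rw [← this]; congr 2; push_cast; ring

lemma continuous_osc (k : ℕ) : Continuous (osc k) := by
  unfold osc
  have : Continuous fun t : ℝ => t ^ ((5 : ℝ)/4) :=
    Real.continuous_rpow_const (by norm_num)
  fun_prop

lemma osc_mul (t : ℝ) : osc 1 t * osc 2 t = 1 := by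
  unfold osc
  rw [← Complex.exp_add]
  convert Complex.exp_zero using 2
  ring

lemma hasDerivAt_osc (k : ℕ) {t : ℝ} (ht : 0 < t) :
    HasDerivAt (osc k)
      ((-1 : ℂ) ^ k * Complex.I * ((aP1 / 2 : ℝ) : ℂ) * ((t ^ ((1 : ℝ)/4) : ℝ) : ℂ) * osc k t) t := by
  have h := ((Real.hasDerivAt_rpow_const (p := (5 : ℝ)/4)
    (Or.inl ht.ne')).ofReal_comp.const_mul ((-1 : ℂ) ^ k * Complex.I * (bP1 : ℂ))).cexp
  refine h.congr_deriv ?_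
  rw [show (5 : ℝ)/4 - 1 = 1/4 by norm_num]
  unfold osc aP1
  push_cast
  ring

/-! ### Monotonicity and decay of the amplitude -/

lemma hasDerivAt_amp {t : ℝ} (ht : 0 < t) : HasDerivAt amp (-ampSlope t) t := by
  have h (p : ℝ) := Real.hasDerivAt_rpow_const (p := p) (Or.inl ht.ne')
  have h' := (((h (-(75 : ℝ)/8)).const_mul ampK).sub
    ((h (-(95 : ℝ)/8)).const_mul (ampK * ampC))).add ((h (-(115 : ℝ)/8)).const_mul (ampK * ampD))
  refine h'.congr_deriv ?_
  unfold ampSlope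
  rw [show -(75 : ℝ)/8 - 1 = -83/8 by norm_num, show -(95 : ℝ)/8 - 1 = -103/8 by norm_num,
    show -(115 : ℝ)/8 - 1 = -123/8 by norm_num]
  ring

lemma rpow_decay {t : ℝ} (ht : LP1 ≤ t) : t ^ (-(5 : ℝ)/2) ≤ 4/121 := by
  unfold LP1 at ht
  have h1 : t ^ (-(5 : ℝ)/2) ≤ t ^ (-(2 : ℝ)) :=
    Real.rpow_le_rpow_of_exponent_le (by linarith) (by norm_num)
  have h2 : t ^ (-(2 : ℝ)) ≤ (11/2 : ℝ) ^ (-(2 : ℝ)) :=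
    Real.rpow_le_rpow_of_nonpos (by norm_num) ht (by norm_num)
  have h3 : (11/2 : ℝ) ^ (-(2 : ℝ)) = 4/121 := by
    rw [Real.rpow_neg (by norm_num), Real.rpow_two]; norm_num
  linarith

lemma LP1_pos : 0 < LP1 := by unfold LP1; norm_num

/-- `ampSlope ≥ 0` on `[L, ∞)`, so `amp` decreases there; this makes the remainder no larger than
the boundary term. -/
lemma slope_nonneg {t : ℝ} (ht : LP1 ≤ t) : 0 ≤ ampSlope t := by
  have hpos : 0 < t := LP1_pos.trans_le ht
  have hu := rpow_decay ht
  have hu0 : 0 < t ^ (-(5 : ℝ)/2) := by positivity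
  have e1 : t ^ (-(103 : ℝ)/8) = t ^ (-(83 : ℝ)/8) * t ^ (-(5 : ℝ)/2) := by
    rw [← Real.rpow_add hpos]; norm_num
  have hC := ampC_upper
  have hC0 := ampC_pos
  have hD : 0 ≤ ampK * ampD * (115/8) * t ^ (-(123 : ℝ)/8) := by
    have := ampK_pos
    unfold ampD; positivity
  have key : 0 ≤ ampK * t ^ (-(83 : ℝ)/8) * (75/8 - ampC * (95/8) * t ^ (-(5 : ℝ)/2)) := by
    have := ampK_pos
    apply mul_nonneg (by positivity)
    nlinarith
  unfold ampSlope
  rw [e1]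
  linarith

lemma amp_le {t : ℝ} (ht : LP1 ≤ t) : amp t ≤ ampK * t ^ (-(75 : ℝ)/8) := by
  have hpos : 0 < t := LP1_pos.trans_le ht
  have hu := rpow_decay ht
  have hu0 : 0 < t ^ (-(5 : ℝ)/2) := by positivity
  have e1 : t ^ (-(115 : ℝ)/8) = t ^ (-(95 : ℝ)/8) * t ^ (-(5 : ℝ)/2) := by
    rw [← Real.rpow_add hpos]; norm_num
  have hC := ampC_lower
  have key : 0 ≤ ampK * t ^ (-(95 : ℝ)/8) * (ampC - ampD * t ^ (-(5 : ℝ)/2)) := by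
    have := ampK_pos
    apply mul_nonneg (by positivity)
    unfold ampD
    linarith
  unfold amp
  rw [e1]
  linarith

lemma tendsto_amp : Filter.Tendsto amp Filter.atTop (nhds 0) := by
  have h (p : ℝ) (hp : p < 0) : Filter.Tendsto (fun t : ℝ => t ^ p) Filter.atTop (nhds 0) := by
    simpa using tendsto_rpow_neg_atTop (y := -p) (by linarith)
  have := (((h (-(75 : ℝ)/8) (by norm_num)).const_mul ampK).sub
    ((h (-(95 : ℝ)/8) (by norm_num)).const_mul (ampK * ampC))).add
    ((h (-(115 : ℝ)/8) (by norm_num)).const_mul (ampK * ampD))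
  simp only [mul_zero, sub_zero, add_zero] at this
  exact this

lemma integrableOn_slope {x : ℝ} (hx : 0 < x) : IntegrableOn ampSlope (Ioi x) := by
  have h (p : ℝ) (hp : p < -1) := integrableOn_Ioi_rpow_of_lt hp hx
  exact (((h (-(83 : ℝ)/8) (by norm_num)).const_mul (ampK * (75/8))).sub
    ((h (-(103 : ℝ)/8) (by norm_num)).const_mul (ampK * ampC * (95/8)))).add
    ((h (-(123 : ℝ)/8) (by norm_num)).const_mul (ampK * ampD * (115/8)))

lemma integrableOn_mul_osc (k : ℕ) {f : ℝ → ℝ} {s : Set ℝ} (hf : IntegrableOn f s) :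
    IntegrableOn (fun t => ((f t : ℝ) : ℂ) * osc k t) s :=
  Integrable.mul_bdd (c := 1) (Integrable.ofReal hf)
    (continuous_osc k).aestronglyMeasurable (Filter.Eventually.of_forall fun t => (norm_osc k t).le)

/-! ### Integration by parts -/

lemma src_eq (k : ℕ) {t : ℝ} (ht : 0 < t) :
    src k t = ((-(amp t * t ^ ((1 : ℝ)/4)) : ℝ) : ℂ) * osc k t := by
  have hr : t ^ (-(5 : ℝ)/8) * t * N₀ t = -(amp t * t ^ ((1 : ℝ)/4)) := by
    have e (p q r : ℝ) (h : p + q = r) : t ^ r = t ^ p * t ^ q := by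
      rw [← h, Real.rpow_add ht]
    have e1 : t ^ (-(95 : ℝ)/8) = t ^ (-(75 : ℝ)/8) * t ^ (-(5 : ℝ)/2) := e _ _ _ (by norm_num)
    have e2 : t ^ (-(115 : ℝ)/8) = t ^ (-(75 : ℝ)/8) * t ^ (-(5 : ℝ)) := e _ _ _ (by norm_num)
    have e3 : t ^ (-(5 : ℝ)/8) * t * t ^ (-(19 : ℝ)/2) = t ^ (-(75 : ℝ)/8) * t ^ ((1 : ℝ)/4) := by
      nth_rewrite 2 [← Real.rpow_one t]
      rw [← Real.rpow_add ht, ← Real.rpow_add ht, ← Real.rpow_add ht]; norm_num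
    unfold amp N₀
    rw [e1, e2]
    change _ * _ * (-ampK * _ * (1 - ampC * _ + ampD * _)) = _
    linear_combination (-ampK * (1 - ampC * t ^ (-(5 : ℝ)/2) + ampD * t ^ (-(5 : ℝ)))) * e3
  rw [← hr]
  unfold src calG osc
  push_cast
  ring

lemma integrableOn_src (k : ℕ) {x : ℝ} (hx : 0 < x) : IntegrableOn (src k) (Ioi x) := by
  have h (p : ℝ) (hp : p < -1) := integrableOn_Ioi_rpow_of_lt hp hx
  have h1 : IntegrableOn (fun t : ℝ => -(amp t * t ^ ((1 : ℝ)/4))) (Ioi x) := by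
    have h2 := ((((h (-(73 : ℝ)/8) (by norm_num)).const_mul ampK).sub
      ((h (-(93 : ℝ)/8) (by norm_num)).const_mul (ampK * ampC))).add
      ((h (-(113 : ℝ)/8) (by norm_num)).const_mul (ampK * ampD))).neg
    refine IntegrableOn.congr_fun h2 (fun t ht => ?_) measurableSet_Ioi
    have ht : 0 < t := hx.trans ht
    have e (p r : ℝ) (h : p + 1/4 = r) : t ^ r = t ^ p * t ^ ((1 : ℝ)/4) := by
      rw [← h, Real.rpow_add ht]
    simp only [Pi.neg_apply, Pi.add_apply, Pi.sub_apply, amp]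
    rw [e (-(75 : ℝ)/8) (-(73 : ℝ)/8) (by norm_num), e (-(95 : ℝ)/8) (-(93 : ℝ)/8) (by norm_num),
      e (-(115 : ℝ)/8) (-(113 : ℝ)/8) (by norm_num)]
    ring
  exact (integrableOn_mul_osc k h1).congr_fun
    (fun t ht => (src_eq k (hx.trans ht)).symm) measurableSet_Ioi

/-- One integration by parts against the phase, whose derivative is `(a/2) t^{1/4}`. -/
lemma integral_src (k : ℕ) {x : ℝ} (hx : 0 < x) :
    ∫ t in Ioi x, src k t =
      (-1 : ℂ) ^ k * (2 / (Complex.I * (aP1 : ℂ))) * (((amp x : ℝ) : ℂ) * osc k x - rem k x) := by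
  have hI1 := integrableOn_mul_osc k (integrableOn_slope hx)
  have hI1' : IntegrableOn (fun t => -(((ampSlope t : ℝ) : ℂ) * osc k t)) (Ioi x) := hI1.neg
  have hI2 := integrableOn_src k hx
  set c : ℂ := (-1 : ℂ) ^ k * Complex.I * ((aP1 / 2 : ℝ) : ℂ) with hc
  have hd : ∀ t ∈ Ici x, HasDerivAt (fun t => ((amp t : ℝ) : ℂ) * osc k t)
      (-(((ampSlope t : ℝ) : ℂ) * osc k t) - c * src k t) t := by
    intro t ht
    have ht : 0 < t := hx.trans_le ht
    refine ((hasDerivAt_amp ht).ofReal_comp.mul (hasDerivAt_osc k ht)).congr_deriv ?_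
    rw [src_eq k ht]
    push_cast
    rw [hc]
    push_cast
    ring
  have hlim : Filter.Tendsto (fun t => ((amp t : ℝ) : ℂ) * osc k t) Filter.atTop (nhds 0) := by
    rw [tendsto_zero_iff_norm_tendsto_zero]
    have := tendsto_amp.norm
    simpa [norm_osc] using this
  have h := integral_Ioi_of_hasDerivAt_of_tendsto' hd (hI1'.sub (hI2.const_mul c)) hlim
  rw [integral_sub hI1' (hI2.const_mul c), integral_neg, integral_const_mul] at h
  change -rem k x - _ = _ at h
  have ha : (aP1 : ℂ) ≠ 0 := by exact_mod_cast aP1_pos.ne'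
  have hs : ((-1 : ℂ) ^ k) * (-1) ^ k = 1 := by rw [← mul_pow]; simp
  have hP : c * ∫ t in Ioi x, src k t = ((amp x : ℝ) : ℂ) * osc k x - rem k x := by
    linear_combination -h
  rw [← hP, hc]
  push_cast
  field_simp
  linear_combination (-(∫ t in Ioi x, src k t)) * hs

lemma norm_rem_le (k : ℕ) {x : ℝ} (hx : LP1 ≤ x) : ‖rem k x‖ ≤ amp x := by
  have hpos : 0 < x := LP1_pos.trans_le hx
  have h1 : ‖rem k x‖ ≤ ∫ t in Ioi x, ampSlope t := by
    refine norm_integral_le_of_norm_le (integrableOn_slope hpos) ?_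
    refine (ae_restrict_iff' measurableSet_Ioi).2 (Filter.Eventually.of_forall fun t ht => ?_)
    have := slope_nonneg (hx.trans (le_of_lt ht))
    rw [norm_mul, norm_osc, mul_one, Complex.norm_real, Real.norm_of_nonneg this]
  have h2 := integral_Ioi_of_hasDerivAt_of_tendsto'
    (fun t ht => hasDerivAt_amp (hpos.trans_le ht)) (integrableOn_slope hpos).neg tendsto_amp
  rw [integral_neg] at h2
  linarith

/-! ### The bound on `w₀` -/

lemma norm_calG (k : ℕ) {x : ℝ} (hx : 0 < x) : ‖calG k x‖ = x ^ (-(5 : ℝ)/8) := by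
  change ‖_ * osc k x‖ = _
  rw [norm_mul, norm_osc, mul_one, Complex.norm_real, Real.norm_of_nonneg (by positivity)]

lemma w₀c_eq (x : ℝ) :
    w₀c x = 1 / (Complex.I * (aP1 : ℂ)) *
      (calG 1 x * (∫ t in Ioi x, src 2 t) - calG 2 x * ∫ t in Ioi x, src 1 t) := by
  unfold w₀c
  rw [show Finset.Icc 1 2 = {1, 2} by decide, Finset.sum_pair (by norm_num)]
  change _ * (-∫ t in Ioi x, src 2 t) + _ * (-∫ t in Ioi x, src 1 t) = _
  ring

/-- Each of the two integrals is at most `(2/a) · 2 amp x`: a boundary term and a remainder, both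
of size at most `amp x`. -/
lemma norm_w₀c_le {x : ℝ} (hx : LP1 ≤ x) :
    ‖w₀c x‖ ≤ 8 / aP1 ^ 2 * ampK * x ^ (-(10 : ℝ)) := by
  have hpos : 0 < x := LP1_pos.trans_le hx
  have ha := aP1_pos
  have hamp : 0 ≤ amp x := (norm_nonneg _).trans (norm_rem_le 1 hx)
  have hP (k : ℕ) : ‖∫ t in Ioi x, src k t‖ ≤ 2 / aP1 * (2 * amp x) := by
    rw [integral_src k hpos]
    simp only [norm_mul, norm_pow, norm_neg, norm_one, one_pow, one_mul, norm_div,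
      Complex.norm_I, Complex.norm_ofNat, Complex.norm_real, Real.norm_of_nonneg ha.le]
    gcongr
    refine (norm_sub_le _ _).trans ?_
    rw [norm_mul, norm_osc, mul_one, Complex.norm_real, Real.norm_of_nonneg hamp]
    linarith [norm_rem_le k hx]
  have h10 : x ^ (-(10 : ℝ)) = x ^ (-(5 : ℝ)/8) * x ^ (-(75 : ℝ)/8) := by
    rw [← Real.rpow_add hpos]; norm_num
  calc ‖w₀c x‖ ≤ 1 / aP1 * (x ^ (-(5 : ℝ)/8) * (2 / aP1 * (2 * amp x)) +
        x ^ (-(5 : ℝ)/8) * (2 / aP1 * (2 * amp x))) := by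
        rw [w₀c_eq, norm_mul, norm_div, norm_mul, norm_one, Complex.norm_I, one_mul,
          Complex.norm_real, Real.norm_of_nonneg ha.le]
        gcongr
        refine (norm_sub_le _ _).trans ?_
        rw [norm_mul, norm_mul, norm_calG _ hpos, norm_calG _ hpos]
        gcongr
        · exact hP 2
        · exact hP 1
    _ = 8 / aP1 ^ 2 * (x ^ (-(5 : ℝ)/8) * amp x) := by field_simp; ring
    _ ≤ 8 / aP1 ^ 2 * (x ^ (-(5 : ℝ)/8) * (ampK * x ^ (-(75 : ℝ)/8))) := by
        gcongr
        exact amp_le hx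
    _ = _ := by rw [h10]; ring

/-! ### The derivative of `w₀` -/

lemma hasDerivAt_calG (k : ℕ) {x : ℝ} (hx : 0 < x) :
    HasDerivAt (calG k)
      ((((-5/8 / x : ℝ) : ℂ) +
        (-1 : ℂ) ^ k * Complex.I * ((aP1 / 2 * x ^ ((1 : ℝ)/4) : ℝ) : ℂ)) * calG k x) x := by
  have h1 := (Real.hasDerivAt_rpow_const (p := -(5 : ℝ)/8) (Or.inl hx.ne')).ofReal_comp
  refine (h1.mul (hasDerivAt_osc k hx)).congr_deriv ?_
  change _ = _ * (_ * osc k x)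
  rw [Real.rpow_sub_one hx.ne']
  push_cast
  ring

lemma continuousAt_src (k : ℕ) {x : ℝ} (hx : 0 < x) : ContinuousAt (src k) x := by
  have h1 : ContinuousAt (fun t : ℝ => ((-(amp t * t ^ ((1 : ℝ)/4)) : ℝ) : ℂ) * osc k t) x := by
    have := (hasDerivAt_amp hx).continuousAt
    have h2 : ContinuousAt (fun t : ℝ => t ^ ((1 : ℝ)/4)) x :=
      Real.continuousAt_rpow_const _ _ (Or.inl hx.ne')
    exact (Complex.continuous_ofReal.continuousAt.comp (this.mul h2).neg).mul
      (continuous_osc k).continuousAt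
  refine h1.congr ?_
  filter_upwards [lt_mem_nhds hx] with t ht
  exact (src_eq k ht).symm

lemma hasDerivAt_integral_src (k : ℕ) {x : ℝ} (hx : 0 < x) :
    HasDerivAt (fun y => ∫ t in Ioi y, src k t) (-src k x) x := by
  have hx2 : 0 < x / 2 := by linarith
  have hint : IntervalIntegrable (src k) volume (x / 2) x := by
    rw [intervalIntegrable_iff_integrableOn_Ioc_of_le (by linarith)]
    exact (integrableOn_src k hx2).mono_set Ioc_subset_Ioi_self
  have hmeas : StronglyMeasurableAtFilter (src k) (nhds x) :=
    ContinuousOn.stronglyMeasurableAtFilter isOpen_Ioi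
      (fun t ht => (continuousAt_src k ht).continuousWithinAt) x (mem_Ioi.2 hx)
  have h := (intervalIntegral.integral_hasDerivAt_right hint hmeas
    (continuousAt_src k hx)).const_sub (∫ t in Ioi (x / 2), src k t)
  refine h.congr_of_eventuallyEq ?_
  filter_upwards [lt_mem_nhds hx] with y hy
  rw [← intervalIntegral.integral_Ioi_sub_Ioi' (integrableOn_src k hx2) (integrableOn_src k hy)]
  ring

/-- The terms of `w₀'` in which the integrals are differentiated cancel because
`𝒢₁ 𝒢₂ = 𝒢₂ 𝒢₁`. -/
lemma hasDerivAt_w₀c {x : ℝ} (hx : 0 < x) :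
    HasDerivAt w₀c (((-5/8 / x : ℝ) : ℂ) * w₀c x -
      ((x ^ ((1 : ℝ)/4) / 2 : ℝ) : ℂ) *
        (calG 1 x * (∫ t in Ioi x, src 2 t) + calG 2 x * ∫ t in Ioi x, src 1 t)) x := by
  have h := (((hasDerivAt_calG 1 hx).mul (hasDerivAt_integral_src 2 hx)).sub
    ((hasDerivAt_calG 2 hx).mul (hasDerivAt_integral_src 1 hx))).const_mul
      (1 / (Complex.I * (aP1 : ℂ)))
  have hfun : w₀c = fun x => 1 / (Complex.I * (aP1 : ℂ)) *
      (calG 1 x * (∫ t in Ioi x, src 2 t) - calG 2 x * ∫ t in Ioi x, src 1 t) := by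
    funext y; exact w₀c_eq y
  rw [hfun]
  refine h.congr_deriv ?_
  have ha : (aP1 : ℂ) ≠ 0 := by exact_mod_cast aP1_pos.ne'
  have hxc : (x : ℂ) ≠ 0 := by exact_mod_cast hx.ne'
  unfold src
  push_cast
  field_simp
  ring

/-- In this combination the boundary terms of the integrations by parts cancel, leaving only the
remainders. -/
lemma norm_cross_le {x : ℝ} (hx : LP1 ≤ x) :
    ‖calG 1 x * (∫ t in Ioi x, src 2 t) + calG 2 x * ∫ t in Ioi x, src 1 t‖ ≤
      4 / aP1 * (x ^ (-(5 : ℝ)/8) * amp x) := by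
  have hpos : 0 < x := LP1_pos.trans_le hx
  have ha := aP1_pos
  have heq : calG 1 x * (∫ t in Ioi x, src 2 t) + calG 2 x * ∫ t in Ioi x, src 1 t =
      2 / (Complex.I * (aP1 : ℂ)) * (calG 2 x * rem 1 x - calG 1 x * rem 2 x) := by
    rw [integral_src 1 hpos, integral_src 2 hpos]
    have h1 : calG 1 x = ((x ^ (-(5 : ℝ)/8) : ℝ) : ℂ) * osc 1 x := rfl
    have h2 : calG 2 x = ((x ^ (-(5 : ℝ)/8) : ℝ) : ℂ) * osc 2 x := rfl
    rw [h1, h2]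
    ring
  rw [heq, norm_mul, norm_div, norm_mul, Complex.norm_I, one_mul, Complex.norm_real,
    Real.norm_of_nonneg ha.le, Complex.norm_ofNat]
  calc 2 / aP1 * ‖calG 2 x * rem 1 x - calG 1 x * rem 2 x‖
      ≤ 2 / aP1 * (x ^ (-(5 : ℝ)/8) * amp x + x ^ (-(5 : ℝ)/8) * amp x) := by
        gcongr
        refine (norm_sub_le _ _).trans ?_
        rw [norm_mul, norm_mul, norm_calG _ hpos, norm_calG _ hpos]
        gcongr
        · exact norm_rem_le 1 hx
        · exact norm_rem_le 2 hx
    _ = _ := by ring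

/-! ### Numerical bounds -/

lemma const_eq : 8 / aP1 ^ 2 * ampK = 4412401 / 589824 := by
  rw [aP1_sq]
  unfold ampK
  have h := Real.mul_self_sqrt (show (0 : ℝ) ≤ 6 by norm_num)
  have h0 : Real.sqrt 6 ≠ 0 := by positivity
  field_simp
  rw [sq, h]
  norm_num

lemma rpow_five_fourths {x : ℝ} (hx : LP1 ≤ x) : 842/100 ≤ x ^ ((5 : ℝ)/4) := by
  have hx' : (11/2 : ℝ) ≤ x := hx
  have h1 : (11/2 : ℝ) ^ ((5 : ℝ)/4) ≤ x ^ ((5 : ℝ)/4) := by gcongr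
  refine le_trans ?_ h1
  rw [show (5 : ℝ)/4 = ((5 : ℕ) : ℝ) * (1/4) by norm_num, Real.rpow_mul (by norm_num),
    Real.rpow_natCast]
  rw [show (1 : ℝ)/4 = ((4 : ℕ) : ℝ)⁻¹ by norm_num]
  rw [Real.le_rpow_inv_iff_of_pos (by norm_num) (by norm_num) (by norm_num), Real.rpow_natCast]
  norm_num

/-- For every real `x ≥ L = 11/2`, `|w₀(x)| ≤ (15/2) x^{-10}` and
`|w₀'(x)| ≤ 8.85 x^{-39/4}`. -/
theorem statement12 :
    ∀ x : ℝ, LP1 ≤ x →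
      ‖w₀c x‖ ≤ (15/2) * x ^ (-(10 : ℝ)) ∧
      ‖deriv w₀c x‖ ≤ 8.85 * x ^ (-(39 : ℝ)/4) := by
  intro x hx
  have hpos : 0 < x := LP1_pos.trans_le hx
  have ha := aP1_pos
  have hw := norm_w₀c_le hx
  rw [const_eq] at hw
  refine ⟨hw.trans (mul_le_mul_of_nonneg_right (by norm_num) (by positivity)), ?_⟩
  rw [(hasDerivAt_w₀c hpos).deriv]
  have hS := norm_cross_le hx
  have hy := rpow_five_fourths hx
  have e1 : x⁻¹ * x ^ (-(10 : ℝ)) * x ^ ((5 : ℝ)/4) = x ^ (-(39 : ℝ)/4) := by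
    rw [← Real.rpow_neg_one, ← Real.rpow_add hpos, ← Real.rpow_add hpos]; norm_num
  have e2 : x ^ ((1 : ℝ)/4) * (x ^ (-(5 : ℝ)/8) * x ^ (-(75 : ℝ)/8)) = x ^ (-(39 : ℝ)/4) := by
    rw [← Real.rpow_add hpos, ← Real.rpow_add hpos]; norm_num
  have hz : x⁻¹ * x ^ (-(10 : ℝ)) ≤ 100/842 * x ^ (-(39 : ℝ)/4) := by
    have : 0 < x⁻¹ * x ^ (-(10 : ℝ)) := by positivity
    nlinarith
  have hK : 2 / aP1 * ampK ≤ 8.29 := by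
    have h1 : ampK ≤ 4412401 / (98304 * (2449/1000)) := by
      unfold ampK
      gcongr
      exact sqrt6_bounds.1
    have h2 : 2 / aP1 ≤ 2 / (4426/1000) := by
      gcongr
      exact aP1_lower
    calc 2 / aP1 * ampK ≤ 2 / (4426/1000) * (4412401 / (98304 * (2449/1000))) := by
          gcongr
          exact ampK_pos.le
      _ ≤ _ := by norm_num
  have t1 : ‖((-5/8 / x : ℝ) : ℂ) * w₀c x‖ ≤ 0.5553 * x ^ (-(39 : ℝ)/4) := by
    rw [norm_mul, Complex.norm_real, Real.norm_eq_abs, abs_div, abs_of_pos hpos]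
    calc |(-5/8 : ℝ)| / x * ‖w₀c x‖
        ≤ |(-5/8 : ℝ)| / x * (4412401 / 589824 * x ^ (-(10 : ℝ))) := by gcongr
      _ = 5/8 * (4412401 / 589824) * (x⁻¹ * x ^ (-(10 : ℝ))) := by
          rw [show |(-5/8 : ℝ)| = 5/8 by norm_num [abs_of_neg]]; ring
      _ ≤ 5/8 * (4412401 / 589824) * (100/842 * x ^ (-(39 : ℝ)/4)) := by gcongr
      _ ≤ _ := by
          have : 0 < x ^ (-(39 : ℝ)/4) := by positivity
          nlinarith
  have t2 : ‖((x ^ ((1 : ℝ)/4) / 2 : ℝ) : ℂ) *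
      (calG 1 x * (∫ t in Ioi x, src 2 t) + calG 2 x * ∫ t in Ioi x, src 1 t)‖ ≤
      8.29 * x ^ (-(39 : ℝ)/4) := by
    rw [norm_mul, Complex.norm_real, Real.norm_of_nonneg (by positivity)]
    calc _ ≤ x ^ ((1 : ℝ)/4) / 2 * (4 / aP1 * (x ^ (-(5 : ℝ)/8) *
          (ampK * x ^ (-(75 : ℝ)/8)))) := by
          gcongr
          refine hS.trans ?_
          gcongr
          exact amp_le hx
      _ = 2 / aP1 * ampK * x ^ (-(39 : ℝ)/4) := by rw [← e2]; ring
      _ ≤ _ := by gcongr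
  refine (norm_sub_le _ _).trans ?_
  have : 0 < x ^ (-(39 : ℝ)/4) := by positivity
  linarith

end
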